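/- For 0 < λ < 1 let φ_λ = B ( W^{1/2}/(W+λ) · ω′ ) ∈ L²(I), where ω′(x) = (1/2) cos(x/2) for x ∈ (0,2π) and ω′(0) = 0, and W^{1/2}/(W+λ) acts by multiplication. Then for every 0 < ε < 3/10 there is a constant c_ε > 0 such that for all x ∈ I and all 0 < λ < 1, |φ_λ(x)| ≤ c_ε λ^{−1/10 − ε} (V(x) sin(x/2))^{−1/2}. -/

import Mathlib

open MeasureTheory Real Set Filter
open scoped Topology ENNReal ComplexConjugate

noncomputable section

/-- The fundamental periodic cell `I = [0, 2π)`. -/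
def II : Set ℝ := Set.Ico 0 (2 * π)

/-- Lebesgue measure restricted to `I`. -/
def muI : Measure ℝ := volume.restrict II

/-- The dispersion relation `ω(x) = |sin(x/2)|`. -/
def omg (x : ℝ) : ℝ := |Real.sin (x / 2)|

/-- `Ω(x,y,z) = ω(x) + ω(y) − ω(z) − ω(x+y−z)`. -/
def Omg (x y z : ℝ) : ℝ := omg x + omg y - omg z - omg (x + y - z)

/-- The representative of `x` modulo `2π` lying in `[0, 2π)`. -/
def mod2pi (x : ℝ) : ℝ := x - 2 * π * (⌊x / (2 * π)⌋ : ℝ)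

/-- `h` on the fundamental cell: `h(x,z) = (z−x)/2 + 2 arcsin( tan(|z−x|/4) cos((x+z)/4) )`. -/
def h0 (x z : ℝ) : ℝ :=
  (z - x) / 2 + 2 * Real.arcsin (Real.tan (|z - x| / 4) * Real.cos ((x + z) / 4))

/-- The extension of `h` to all of `ℝ²`: `h(x,z) = h(x mod 2π, z mod 2π) − (x − (x mod 2π))`. -/
def hFPU (x z : ℝ) : ℝ := h0 (mod2pi x) (mod2pi z) - (x - mod2pi x)

/-- `F₊(x,y) = (cos(x/2)+cos(y/2))² + 4 sin(x/2) sin(y/2)`. -/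
def Fp (x y : ℝ) : ℝ :=
  (Real.cos (x / 2) + Real.cos (y / 2)) ^ 2 + 4 * Real.sin (x / 2) * Real.sin (y / 2)

/-- `F₋(x,y) = (cos(x/2)+cos(y/2))² − 4 sin(x/2) sin(y/2)`. -/
def Fm (x y : ℝ) : ℝ :=
  (Real.cos (x / 2) + Real.cos (y / 2)) ^ 2 - 4 * Real.sin (x / 2) * Real.sin (y / 2)

/-- The kernel `K₁(x,y) = 4·𝟙(F₋(x,y) > 0)/√(F₋(x,y))`. -/
def K1 (x y : ℝ) : ℝ := if 0 < Fm x y then 4 / Real.sqrt (Fm x y) else 0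

/-- The kernel `K₂(x,y) = 2/√(F₊(x,y))`. -/
def K2 (x y : ℝ) : ℝ := 2 / Real.sqrt (Fp x y)

/-- `V(x) = ∫_I K₂(x,y) dy`. -/
def VV (x : ℝ) : ℝ := ∫ y in II, K2 x y

/-- `W(x) = sin²(x/2)·V(x)`. -/
def WW (x : ℝ) : ℝ := Real.sin (x / 2) ^ 2 * VV x

/-- `ω′(x) = (1/2)cos(x/2)` on `(0,2π)`, `ω′(0) = 0`. -/
def omg' (x : ℝ) : ℝ := if x = 0 then 0 else Real.cos (x / 2) / 2

/-- The kernel of `B`: `B(x,y) = V(x)^{−1/2}(2K₂(x,y)−K₁(x,y))V(y)^{−1/2}`. -/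
def Bker (x y : ℝ) : ℝ :=
  VV x ^ (-(1 : ℝ) / 2) * (2 * K2 x y - K1 x y) * VV y ^ (-(1 : ℝ) / 2)

/-- `φ_λ = B (W^{1/2}/(W+λ) ω′)`, computed via the kernel of `B`. -/
def phiLam (lam x : ℝ) : ℝ :=
  ∫ y in II, Bker x y * (Real.sqrt (WW y) / (WW y + lam) * omg' y)

/-!
**Idea.** The weight `V^{-1/2} W^{1/2}` equals `sin (y/2)`, so `φ_λ` is the integral of
`2 K₂ - K₁` against `sin (y/2) / (W + λ)`, up to the factor `V(x)^{-1/2}`.  A lower bound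
`V ≥ sin^{-1/3}` gives `W ≥ sin^{5/3}`, and interpolating `W^{1-θ} λ^θ ≤ W + λ` trades a power
`λ^{-θ}` for a factor `sin^{(5θ-2)/3}`, whose exponent exceeds `-1/2` exactly when `θ > 1/10`.

The kernels have inverse square root singularities with amplitude `sin(x/2)^{-1/2}`: `F₊` is
bounded below by `4 sin(x/2) sin(y/2)`, while on each of the two components of `{F₋ > 0}`
(`cos(x/2) + cos(y/2)` of either sign) `F₋` grows at least like `sin(x/2)` times the distance to
an endpoint.  Multiplied by the weight, all singularities keep exponents above `-1`, hence are
integrable uniformly in their location.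
-/

section Rpow

lemma rpow_neg_half {t : ℝ} (ht : 0 ≤ t) : t ^ (-1 / 2 : ℝ) = (√t)⁻¹ := by
  rw [neg_div, rpow_neg ht, sqrt_eq_rpow]

lemma div_sqrt_le_mul_rpow {c F t : ℝ} (hc : 0 ≤ c) (ht : 0 < t) (h : t ≤ F) :
    c / √F ≤ c * t ^ (-1 / 2 : ℝ) := by
  rw [rpow_neg_half ht.le, ← div_eq_mul_inv]
  gcongr

lemma min_rpow_le_add {X Y r : ℝ} (hX : 0 ≤ X) (hY : 0 ≤ Y) : min X Y ^ r ≤ X ^ r + Y ^ r := by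
  have hX' := rpow_nonneg hX r
  have hY' := rpow_nonneg hY r
  rcases min_choice X Y with h | h <;> rw [h] <;> linarith

lemma rpow_mul_rpow_le_rpow_add_rpow {X Y α β : ℝ} (hX : 0 < X) (hY : 0 < Y) (hα : α ≤ 0)
    (hβ : β ≤ 0) : X ^ α * Y ^ β ≤ X ^ (α + β) + Y ^ (α + β) := by
  have hmin : 0 < min X Y := lt_min hX hY
  calc X ^ α * Y ^ β ≤ min X Y ^ α * min X Y ^ β :=
        mul_le_mul (rpow_le_rpow_of_nonpos hmin (min_le_left X Y) hα)
          (rpow_le_rpow_of_nonpos hmin (min_le_right X Y) hβ) (by positivity) (by positivity)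
    _ = min X Y ^ (α + β) := (rpow_add hmin α β).symm
    _ ≤ X ^ (α + β) + Y ^ (α + β) := min_rpow_le_add hX.le hY.le

lemma rpow_one_sub_mul_rpow_le_add {a b θ : ℝ} (ha : 0 ≤ a) (hb : 0 ≤ b) (hθ : θ ∈ Icc 0 1) :
    a ^ (1 - θ) * b ^ θ ≤ a + b := by
  have hθ' : 0 ≤ 1 - θ := sub_nonneg.2 hθ.2
  calc a ^ (1 - θ) * b ^ θ ≤ (1 - θ) * a + θ * b :=
        geom_mean_le_arith_mean2_weighted hθ' hθ.1 ha hb (sub_add_cancel 1 θ)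
    _ ≤ a + b := by nlinarith [mul_nonneg hθ.1 ha, mul_nonneg hθ' hb]

end Rpow

section SingularIntegrals

lemma intervalIntegrable_abs_sub_rpow {r : ℝ} (hr : -1 < r) (z a b : ℝ) :
    IntervalIntegrable (fun y => |y - z| ^ r) volume a b := by
  have hloc : LocallyIntegrable (fun u : ℝ => |u| ^ r) :=
    locallyIntegrable_of_norm_le_rpow (C := 1) (α := -r) (by simp) (by simpa using neg_lt.1 hr)
      (Eventually.of_forall fun u => by
        rw [norm_of_nonneg (by positivity), one_mul, neg_neg, norm_eq_abs])
      (by fun_prop : Measurable fun u : ℝ => |u| ^ r).aestronglyMeasurable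
  have hint : IntervalIntegrable (fun u : ℝ => |u| ^ r) volume (a - z) (b - z) :=
    (hloc.integrableOn_isCompact isCompact_uIcc).intervalIntegrable
  simpa using hint.comp_sub_right z

lemma integral_abs_sub_rpow_le {r a b z : ℝ} (hr : -1 < r) (hz : z ∈ Icc a b) :
    ∫ y in a..b, |y - z| ^ r ≤ ∫ u in (a - b)..(b - a), |u| ^ r := by
  rw [intervalIntegral.integral_comp_sub_right fun u => |u| ^ r]
  refine intervalIntegral.integral_mono_interval (by linarith [hz.2])
    (by linarith [hz.1, hz.2]) (by linarith [hz.1])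
    (Eventually.of_forall fun u => by positivity) ?_
  simpa using intervalIntegrable_abs_sub_rpow hr 0 (a - b) (b - a)

lemma integrableOn_II_iff {f : ℝ → ℝ} :
    IntegrableOn f II ↔ IntervalIntegrable f volume 0 (2 * π) :=
  (intervalIntegrable_iff_integrableOn_Ico_of_le two_pi_pos.le).symm

lemma setIntegral_II (f : ℝ → ℝ) : ∫ y in II, f y = ∫ y in 0..2 * π, f y := by
  rw [II, integral_Ico_eq_integral_Ioc, intervalIntegral.integral_of_le two_pi_pos.le]

lemma ae_restrict_II_mem_Ioo : ∀ᵐ y ∂volume.restrict II, y ∈ Ioo 0 (2 * π) := by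
  rw [II, ← restrict_Ioo_eq_restrict_Ico]
  exact ae_restrict_mem measurableSet_Ioo

lemma sin_half_pos {y : ℝ} (hy : y ∈ Ioo 0 (2 * π)) : 0 < sin (y / 2) :=
  sin_pos_of_pos_of_lt_pi (by linarith [hy.1]) (by linarith [hy.2])

lemma min_div_pi_le_sin_half {y : ℝ} (hy : y ∈ Icc 0 (2 * π)) :
    min y (2 * π - y) / π ≤ sin (y / 2) := by
  rcases le_total y π with h | h
  · calc min y (2 * π - y) / π ≤ y / π := by gcongr; exact min_le_left _ _
      _ = 2 / π * (y / 2) := by ring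
      _ ≤ sin (y / 2) := mul_le_sin (by linarith [hy.1]) (by linarith)
  · calc min y (2 * π - y) / π ≤ (2 * π - y) / π := by gcongr; exact min_le_right _ _
      _ = 2 / π * (π - y / 2) := by ring
      _ ≤ sin (π - y / 2) := mul_le_sin (by linarith [hy.2]) (by linarith)
      _ = sin (y / 2) := sin_pi_sub _

lemma integrableOn_sin_half_rpow {r : ℝ} (hr : -1 < r) (hr0 : r ≤ 0) :
    IntegrableOn (fun y => sin (y / 2) ^ r) II := by
  have hmajorant : IntegrableOn (fun y => (|y - 0| ^ r + |y - 2 * π| ^ r) / π ^ r) II :=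
    integrableOn_II_iff.2 (((intervalIntegrable_abs_sub_rpow hr 0 _ _).add
      (intervalIntegrable_abs_sub_rpow hr (2 * π) _ _)).div_const _)
  refine hmajorant.mono'
    (by fun_prop : Measurable fun y : ℝ => sin (y / 2) ^ r).aestronglyMeasurable ?_
  filter_upwards [ae_restrict_II_mem_Ioo] with y hy
  have hy' : 0 < 2 * π - y := by linarith [hy.2]
  have hmin : 0 < min y (2 * π - y) := lt_min hy.1 hy'
  rw [norm_of_nonneg (rpow_nonneg (sin_half_pos hy).le r), sub_zero, abs_of_pos hy.1,
    abs_sub_comm, abs_of_pos hy']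
  calc sin (y / 2) ^ r ≤ (min y (2 * π - y) / π) ^ r :=
        rpow_le_rpow_of_nonpos (by positivity) (min_div_pi_le_sin_half (Ioo_subset_Icc_self hy)) hr0
    _ = min y (2 * π - y) ^ r / π ^ r := div_rpow hmin.le pi_pos.le r
    _ ≤ (y ^ r + (2 * π - y) ^ r) / π ^ r := by
        gcongr
        exact min_rpow_le_add hy.1.le hy'.le

/-- The sum of the `r`-th powers of `sin (y/2)`, `|y - p|` and `|y - q|`; it dominates the kernel
of `B`, whose singularities in `y` sit at the ends of the cell and at two points `p`, `q`. -/
def singularSum (r p q y : ℝ) : ℝ := sin (y / 2) ^ r + |y - p| ^ r + |y - q| ^ r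

lemma exists_setIntegral_singularSum_le {r : ℝ} (hr : -1 < r) (hr0 : r ≤ 0) :
    ∃ M > 0, ∀ p ∈ Icc 0 (2 * π), ∀ q ∈ Icc 0 (2 * π),
      IntegrableOn (singularSum r p q) II ∧ ∫ y in II, singularSum r p q y ≤ M := by
  have hsin := integrableOn_sin_half_rpow hr hr0
  have habs (z : ℝ) : IntegrableOn (fun y => |y - z| ^ r) II :=
    integrableOn_II_iff.2 (intervalIntegrable_abs_sub_rpow hr z _ _)
  have hsinp (p : ℝ) : IntegrableOn (fun y => sin (y / 2) ^ r + |y - p| ^ r) II :=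
    hsin.add (habs p)
  have hle {z : ℝ} (hz : z ∈ Icc 0 (2 * π)) :
      ∫ y in II, |y - z| ^ r ≤ ∫ u in (0 - 2 * π)..(2 * π - 0), |u| ^ r := by
    rw [setIntegral_II]
    exact integral_abs_sub_rpow_le hr hz
  refine ⟨max 1 ((∫ y in II, sin (y / 2) ^ r) + (∫ u in (0 - 2 * π)..(2 * π - 0), |u| ^ r)
    + ∫ u in (0 - 2 * π)..(2 * π - 0), |u| ^ r), by positivity, fun p hp q hq =>
    ⟨(hsinp p).add (habs q), le_max_of_le_right ?_⟩⟩
  calc ∫ y in II, singularSum r p q y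
      = (∫ y in II, sin (y / 2) ^ r) + (∫ y in II, |y - p| ^ r) + ∫ y in II, |y - q| ^ r := by
        rw [← integral_add hsin (habs p), ← integral_add (hsinp p) (habs q)]
        rfl
    _ ≤ _ := by gcongr <;> exact hle ‹_›

lemma sin_half_rpow_mul_singularSum_le {α β p q y : ℝ} (hα : α ≤ 0) (hβ : β ≤ 0)
    (hy : y ∈ Ioo 0 (2 * π)) (hp : y ≠ p) (hq : y ≠ q) :
    sin (y / 2) ^ α * singularSum β p q y ≤ 3 * singularSum (α + β) p q y := by
  have hs := sin_half_pos hy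
  have hpp := rpow_mul_rpow_le_rpow_add_rpow hs (abs_pos.2 (sub_ne_zero.2 hp)) hα hβ
  have hqq := rpow_mul_rpow_le_rpow_add_rpow hs (abs_pos.2 (sub_ne_zero.2 hq)) hα hβ
  have hp0 : 0 ≤ |y - p| ^ (α + β) := by positivity
  have hq0 : 0 ≤ |y - q| ^ (α + β) := by positivity
  rw [singularSum, mul_add, mul_add, ← rpow_add hs, singularSum]
  linarith

end SingularIntegrals

section KernelK1

lemma Fm_eq_quarter_angle (x y : ℝ) :
    Fm x y = 4 * (cos (y / 4) ^ 2 - sin (x / 4) ^ 2) ^ 2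
      - 8 * sin (x / 2) * (sin (y / 4) * cos (y / 4)) := by
  have hx : cos (x / 2) = 1 - 2 * sin (x / 4) ^ 2 := by
    rw [← cos_two_mul_eq_one_sub]; ring_nf
  have hy : cos (y / 2) = 2 * cos (y / 4) ^ 2 - 1 := by rw [← cos_two_mul]; ring_nf
  have hy' : sin (y / 2) = 2 * sin (y / 4) * cos (y / 4) := by rw [← sin_two_mul]; ring_nf
  rw [Fm, hx, hy, hy']
  ring

-- After division by `c ^ 4`, the right-hand side becomes `4 (1 - κ / c ^ 2) ^ 2 - 8 σ s / c ^ 3`,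
-- in which both terms are monotone in the angle.
lemma quartic_lower_bound {κ σ c s c' s' : ℝ} (hκ : 0 ≤ κ) (hσ : 0 ≤ σ) (hs : 0 ≤ s)
    (hc' : 0 < c') (hcc' : c' ≤ c) (hκc' : κ ≤ c' ^ 2) (hD : 0 ≤ s' * c - c' * s)
    (hF : 0 ≤ 4 * (c' ^ 2 - κ) ^ 2 - 8 * σ * (s' * c')) :
    8 * σ * (s' * c - c' * s) ≤ 4 * (c ^ 2 - κ) ^ 2 - 8 * σ * (s * c) := by
  have hc : 0 < c := hc'.trans_le hcc'
  have hsq : c' ^ 2 ≤ c ^ 2 := by gcongr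
  have hfirst : c ^ 4 * (c' ^ 2 - κ) ^ 2 ≤ c' ^ 4 * (c ^ 2 - κ) ^ 2 := by
    have hbase : c ^ 2 * (c' ^ 2 - κ) ≤ c' ^ 2 * (c ^ 2 - κ) := by
      linarith [mul_le_mul_of_nonneg_right hsq hκ]
    calc c ^ 4 * (c' ^ 2 - κ) ^ 2 = (c ^ 2 * (c' ^ 2 - κ)) ^ 2 := by ring
      _ ≤ (c' ^ 2 * (c ^ 2 - κ)) ^ 2 :=
          pow_le_pow_left₀ (mul_nonneg (sq_nonneg c) (sub_nonneg.2 hκc')) hbase 2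
      _ = c' ^ 4 * (c ^ 2 - κ) ^ 2 := by ring
  have hsecond : c' ^ 4 * (s' * c - c' * s) ≤ c ^ 4 * (s' * c') - c' ^ 4 * (s * c) := by
    calc c' ^ 4 * (s' * c - c' * s) = c' ^ 3 * c' * (s' * c - c' * s) := by ring
      _ ≤ c ^ 3 * c' * (s' * c - c' * s) + c * c' * (c' * s) * (c ^ 2 - c' ^ 2) :=
          le_add_of_le_of_nonneg (by gcongr)
            (mul_nonneg (by positivity) (sub_nonneg.2 hsq))
      _ = c ^ 4 * (s' * c') - c' ^ 4 * (s * c) := by ring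
  refine le_of_mul_le_mul_left ?_ (pow_pos hc' 4)
  calc c' ^ 4 * (8 * σ * (s' * c - c' * s)) = 8 * σ * (c' ^ 4 * (s' * c - c' * s)) := by ring
    _ ≤ 8 * σ * (c ^ 4 * (s' * c') - c' ^ 4 * (s * c)) := by gcongr
    _ ≤ 4 * (c ^ 4 * (c' ^ 2 - κ) ^ 2) - 8 * σ * (c' ^ 4 * (s * c)) := by
        linarith [mul_nonneg (pow_nonneg hc.le 4) hF]
    _ ≤ 4 * (c' ^ 4 * (c ^ 2 - κ) ^ 2) - 8 * σ * (c' ^ 4 * (s * c)) := by gcongr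
    _ = c' ^ 4 * (4 * (c ^ 2 - κ) ^ 2 - 8 * σ * (s * c)) := by ring

lemma sin_half_mul_sub_le_Fm {x y z : ℝ} (hx : 0 ≤ sin (x / 2)) (hy : 0 ≤ y) (hyz : y ≤ z)
    (hz : z < 2 * π) (hC : 0 ≤ cos (x / 2) + cos (z / 2)) (hF : 0 ≤ Fm x z) :
    sin (x / 2) * (z - y) ≤ Fm x y := by
  have hπ := pi_pos
  have hκ : sin (x / 4) ^ 2 ≤ cos (z / 4) ^ 2 := by
    rw [show x / 2 = 2 * (x / 4) by ring, show z / 2 = 2 * (z / 4) by ring,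
      cos_two_mul_eq_one_sub, cos_two_mul] at hC
    linarith
  have hsub : sin ((z - y) / 4) = sin (z / 4) * cos (y / 4) - cos (z / 4) * sin (y / 4) := by
    rw [sub_div, sin_sub]
  have hD : 0 ≤ sin ((z - y) / 4) :=
    sin_nonneg_of_nonneg_of_le_pi (by linarith) (by linarith)
  have hjordan : (z - y) / (2 * π) ≤ sin ((z - y) / 4) := by
    calc (z - y) / (2 * π) = 2 / π * ((z - y) / 4) := by field_simp; ring
      _ ≤ sin ((z - y) / 4) := mul_le_sin (by linarith) (by linarith)
  have hquartic := quartic_lower_bound (sq_nonneg (sin (x / 4))) hx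
    (sin_nonneg_of_nonneg_of_le_pi (by linarith) (by linarith))
    (cos_pos_of_mem_Ioo ⟨by linarith, by linarith⟩)
    (cos_le_cos_of_nonneg_of_le_pi (by linarith) (by linarith) (by linarith : y / 4 ≤ z / 4))
    hκ (hsub ▸ hD) (Fm_eq_quarter_angle x z ▸ hF)
  rw [← hsub, ← Fm_eq_quarter_angle] at hquartic
  calc sin (x / 2) * (z - y) ≤ 8 * sin (x / 2) * ((z - y) / (2 * π)) := by
        rw [show 8 * sin (x / 2) * ((z - y) / (2 * π)) = 4 / π * (sin (x / 2) * (z - y)) by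
          field_simp; ring]
        exact le_mul_of_one_le_left (mul_nonneg hx (sub_nonneg.2 hyz))
          ((one_le_div hπ).2 pi_le_four)
    _ ≤ 8 * sin (x / 2) * sin ((z - y) / 4) := by gcongr
    _ ≤ Fm x y := hquartic

lemma exists_mul_abs_sub_le {S : Set ℝ} {f : ℝ → ℝ} {a b m : ℝ} (hab : a ≤ b) (hS : S ⊆ Icc a b)
    (hm : 0 < m) (hf : ∀ y ∈ S, ∀ z ∈ S, m * (z - y) ≤ f y) :
    ∃ p ∈ Icc a b, ∀ y ∈ S, m * |y - p| ≤ f y := by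
  rcases S.eq_empty_or_nonempty with rfl | hne
  · exact ⟨a, left_mem_Icc.2 hab, by simp⟩
  have hbdd : BddAbove S := bddAbove_Icc.mono hS
  refine ⟨sSup S, ⟨?_, csSup_le hne fun y hy => (hS hy).2⟩, fun y hy => ?_⟩
  · obtain ⟨y, hy⟩ := hne
    exact (hS hy).1.trans (le_csSup hbdd hy)
  · have hsup : sSup S ≤ y + f y / m := csSup_le hne fun z hz => by
      rw [← sub_le_iff_le_add', le_div_iff₀' hm]
      exact hf y hy z hz
    rw [abs_sub_comm, abs_of_nonneg (sub_nonneg.2 (le_csSup hbdd hy)), ← le_div_iff₀' hm]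
    linarith

lemma exists_sin_half_mul_abs_sub_le_Fm_of_pos {x : ℝ} (hx : x ∈ Ioo 0 (2 * π)) :
    ∃ p ∈ Icc 0 (2 * π), ∀ y ∈ Ioo 0 (2 * π), 0 < cos (x / 2) + cos (y / 2) → 0 < Fm x y →
      sin (x / 2) * |y - p| ≤ Fm x y := by
  have hs := sin_half_pos hx
  obtain ⟨p, hp, hle⟩ := exists_mul_abs_sub_le
    (S := {y ∈ Ioo 0 (2 * π) | 0 < cos (x / 2) + cos (y / 2) ∧ 0 < Fm x y}) (f := Fm x)
    two_pi_pos.le (fun y hy => Ioo_subset_Icc_self hy.1) hs fun y hy z hz => by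
      rcases le_total y z with h | h
      · exact sin_half_mul_sub_le_Fm hs.le hy.1.1.le h hz.1.2 hz.2.1.le hz.2.2.le
      · exact (mul_nonpos_of_nonneg_of_nonpos hs.le (sub_nonpos.2 h)).trans hy.2.2.le
  exact ⟨p, hp, fun y hy hC hF => hle y ⟨hy, hC, hF⟩⟩

lemma two_pi_sub_half (t : ℝ) : (2 * π - t) / 2 = π - t / 2 := by ring

lemma Fm_two_pi_sub (x y : ℝ) : Fm (2 * π - x) (2 * π - y) = Fm x y := by
  simp only [Fm, two_pi_sub_half, cos_pi_sub, sin_pi_sub]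
  ring

lemma exists_sin_half_mul_abs_sub_le_Fm_of_neg {x : ℝ} (hx : x ∈ Ioo 0 (2 * π)) :
    ∃ q ∈ Icc 0 (2 * π), ∀ y ∈ Ioo 0 (2 * π), cos (x / 2) + cos (y / 2) < 0 → 0 < Fm x y →
      sin (x / 2) * |y - q| ≤ Fm x y := by
  have hmem {t : ℝ} (ht : t ∈ Ioo 0 (2 * π)) : 2 * π - t ∈ Ioo 0 (2 * π) :=
    ⟨by linarith [ht.2], by linarith [ht.1]⟩
  obtain ⟨p, hp, hle⟩ := exists_sin_half_mul_abs_sub_le_Fm_of_pos (hmem hx)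
  refine ⟨2 * π - p, ⟨by linarith [hp.2], by linarith [hp.1]⟩, fun y hy hC hF => ?_⟩
  have hrefl := hle (2 * π - y) (hmem hy)
    (by simp only [two_pi_sub_half, cos_pi_sub]; linarith) (by rwa [Fm_two_pi_sub])
  rwa [Fm_two_pi_sub, two_pi_sub_half, sin_pi_sub, sub_right_comm, abs_sub_comm] at hrefl

lemma cos_half_add_cos_half_ne_zero_of_Fm_pos {x y : ℝ} (hx : 0 ≤ sin (x / 2))
    (hy : 0 ≤ sin (y / 2)) (hF : 0 < Fm x y) : cos (x / 2) + cos (y / 2) ≠ 0 := by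
  intro hC
  rw [Fm, hC] at hF
  nlinarith [mul_nonneg hx hy]

lemma K1_nonneg (x y : ℝ) : 0 ≤ K1 x y := by
  unfold K1
  split_ifs <;> positivity

lemma K1_le_of_mul_abs_sub_le {x y z : ℝ} (hx : x ∈ Ioo 0 (2 * π)) (hyz : y ≠ z)
    (h : 0 < Fm x y → sin (x / 2) * |y - z| ≤ Fm x y) :
    K1 x y ≤ 4 * (sin (x / 2) ^ (-1 / 2 : ℝ) * |y - z| ^ (-1 / 2 : ℝ)) := by
  have hs := sin_half_pos hx
  have hd : 0 < |y - z| := abs_pos.2 (sub_ne_zero.2 hyz)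
  rw [← mul_rpow hs.le hd.le]
  unfold K1
  split_ifs with hF
  · exact div_sqrt_le_mul_rpow zero_le_four (mul_pos hs hd) (h hF)
  · positivity

lemma exists_K1_le {x : ℝ} (hx : x ∈ Ioo 0 (2 * π)) :
    ∃ p ∈ Icc 0 (2 * π), ∃ q ∈ Icc 0 (2 * π), ∀ y ∈ Ioo 0 (2 * π), y ≠ p → y ≠ q →
      K1 x y ≤ 4 * sin (x / 2) ^ (-1 / 2 : ℝ)
        * (|y - p| ^ (-1 / 2 : ℝ) + |y - q| ^ (-1 / 2 : ℝ)) := by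
  obtain ⟨p, hp, hpos⟩ := exists_sin_half_mul_abs_sub_le_Fm_of_pos hx
  obtain ⟨q, hq, hneg⟩ := exists_sin_half_mul_abs_sub_le_Fm_of_neg hx
  refine ⟨p, hp, q, hq, fun y hy hyp hyq => ?_⟩
  have hs := sin_half_pos hx
  have hp0 : 0 ≤ 4 * (sin (x / 2) ^ (-1 / 2 : ℝ) * |y - p| ^ (-1 / 2 : ℝ)) := by positivity
  have hq0 : 0 ≤ 4 * (sin (x / 2) ^ (-1 / 2 : ℝ) * |y - q| ^ (-1 / 2 : ℝ)) := by positivity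
  rcases le_or_gt (cos (x / 2) + cos (y / 2)) 0 with hC | hC
  · have hK1 := K1_le_of_mul_abs_sub_le hx hyq fun hF => hneg y hy
      (hC.lt_of_ne (cos_half_add_cos_half_ne_zero_of_Fm_pos hs.le (sin_half_pos hy).le hF)) hF
    linarith
  · have hK1 := K1_le_of_mul_abs_sub_le hx hyp (hpos y hy hC)
    linarith

end KernelK1

section KernelK2

lemma K2_nonneg (x y : ℝ) : 0 ≤ K2 x y := by
  unfold K2
  positivity

lemma four_mul_sin_mul_sin_le_Fp (x y : ℝ) : 4 * sin (x / 2) * sin (y / 2) ≤ Fp x y :=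
  le_add_of_nonneg_left (sq_nonneg _)

lemma K2_le {x y : ℝ} (hx : x ∈ Ioo 0 (2 * π)) (hy : y ∈ Ioo 0 (2 * π)) :
    K2 x y ≤ 2 * (sin (x / 2) ^ (-1 / 2 : ℝ) * sin (y / 2) ^ (-1 / 2 : ℝ)) := by
  have hsx := sin_half_pos hx
  have hsy := sin_half_pos hy
  rw [← mul_rpow hsx.le hsy.le]
  refine div_sqrt_le_mul_rpow zero_le_two (mul_pos hsx hsy) ?_
  linarith [four_mul_sin_mul_sin_le_Fp x y, mul_pos hsx hsy]

lemma integrableOn_K2 {x : ℝ} (hx : x ∈ Ioo 0 (2 * π)) : IntegrableOn (K2 x) II := by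
  have hsin : IntegrableOn (fun y => sin (y / 2) ^ (-1 / 2 : ℝ)) II :=
    integrableOn_sin_half_rpow (by norm_num) (by norm_num)
  refine ((hsin.const_mul (sin (x / 2) ^ (-1 / 2 : ℝ))).const_mul 2).mono'
    (by unfold K2 Fp; fun_prop : Measurable (K2 x)).aestronglyMeasurable ?_
  filter_upwards [ae_restrict_II_mem_Ioo] with y hy
  rw [norm_of_nonneg (K2_nonneg x y)]
  exact K2_le hx hy

lemma Fp_le_of_sin_half_eq_cube {x y r : ℝ} (hx : x ∈ Ico π (2 * π)) (hr : 0 ≤ r)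
    (hxr : sin (x / 2) = r ^ 3) (hy : y ∈ Icc 0 (2 * r)) : Fp x y ≤ 5 * r ^ 4 := by
  have hr1 : r ≤ 1 := (pow_le_one_iff_of_nonneg hr three_ne_zero).1 (hxr ▸ sin_le_one _)
  have hcosx : cos (x / 2) ≤ 0 := cos_nonpos_of_pi_div_two_le_of_le (by linarith [hx.1])
    (by linarith [hx.2, pi_pos])
  have hcosx' : 1 + cos (x / 2) ≤ r ^ 2 := by
    calc 1 + cos (x / 2) ≤ sin (x / 2) ^ 2 := by
          nlinarith [sin_sq_add_cos_sq (x / 2), neg_one_le_cos (x / 2)]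
      _ = r ^ 6 := by rw [hxr]; ring
      _ ≤ r ^ 2 := pow_le_pow_of_le_one hr hr1 (by norm_num)
  have hcosy : 1 - cos (y / 2) ≤ r ^ 2 := by
    nlinarith [one_sub_sq_div_two_le_cos (x := y / 2), hy.1, hy.2]
  have hsiny : sin (y / 2) ≤ r := (sin_le (by linarith [hy.1])).trans (by linarith [hy.2])
  have hsum : (cos (x / 2) + cos (y / 2)) ^ 2 ≤ (r ^ 2) ^ 2 :=
    sq_le_sq' (by linarith [neg_one_le_cos (x / 2)]) (by linarith [cos_le_one (y / 2)])
  calc Fp x y ≤ (r ^ 2) ^ 2 + 4 * r ^ 3 * r := by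
        unfold Fp
        rw [hxr]
        gcongr
    _ = 5 * r ^ 4 := by ring

lemma inv_le_VV_of_sin_half_eq_cube {x r : ℝ} (hx : x ∈ Ico π (2 * π)) (hr : 0 < r)
    (hxr : sin (x / 2) = r ^ 3) : r⁻¹ ≤ VV x := by
  have hx' : x ∈ Ioo 0 (2 * π) := ⟨pi_pos.trans_le hx.1, hx.2⟩
  have hr1 : r ≤ 1 := (pow_le_one_iff_of_nonneg hr.le three_ne_zero).1 (hxr ▸ sin_le_one _)
  have hsub : Ioo 0 (2 * r) ⊆ II := fun y hy => ⟨hy.1.le, by linarith [hy.2, pi_gt_three]⟩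
  have hK2 : ∀ y ∈ Ioo 0 (2 * r), (2 * r ^ 2)⁻¹ ≤ K2 x y := fun y hy => by
    have hy' : y ∈ Ioo 0 (2 * π) := ⟨hy.1, (hsub hy).2⟩
    have hFp : 0 < Fp x y := lt_of_lt_of_le
      (by have := sin_half_pos hx'; have := sin_half_pos hy'; positivity)
      (four_mul_sin_mul_sin_le_Fp x y)
    have hsqrt : √(Fp x y) ≤ 4 * r ^ 2 := by
      rw [sqrt_le_left (by positivity)]
      nlinarith [Fp_le_of_sin_half_eq_cube hx hr.le hxr (Ioo_subset_Icc_self hy), pow_pos hr 4]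
    calc (2 * r ^ 2)⁻¹ = 2 / (4 * r ^ 2) := by field_simp; norm_num
      _ ≤ K2 x y := by unfold K2; gcongr
  calc r⁻¹ = (2 * r ^ 2)⁻¹ * volume.real (Ioo 0 (2 * r)) := by
        rw [volume_real_Ioo_of_le (by positivity)]
        field_simp
        ring
    _ ≤ ∫ y in Ioo 0 (2 * r), K2 x y :=
        setIntegral_ge_of_const_le_real measurableSet_Ioo measure_Ioo_lt_top.ne hK2
          ((integrableOn_K2 hx').mono_set hsub)
    _ ≤ VV x := setIntegral_mono_set (integrableOn_K2 hx')
        (Eventually.of_forall fun y => K2_nonneg x y) hsub.eventuallyLE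

lemma K2_two_pi_sub (x y : ℝ) : K2 (2 * π - x) (2 * π - y) = K2 x y := by
  simp only [K2, Fp, two_pi_sub_half, cos_pi_sub, sin_pi_sub]
  ring_nf

lemma VV_two_pi_sub (x : ℝ) : VV (2 * π - x) = VV x := by
  have hrefl := intervalIntegral.integral_comp_sub_left (K2 (2 * π - x)) (2 * π)
    (a := 0) (b := 2 * π)
  simp only [K2_two_pi_sub, sub_self, sub_zero] at hrefl
  rw [VV, VV, setIntegral_II, setIntegral_II, hrefl]

lemma sin_half_rpow_le_VV {x : ℝ} (hx : x ∈ Ioo 0 (2 * π)) :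
    sin (x / 2) ^ (-1 / 3 : ℝ) ≤ VV x := by
  wlog hπx : π ≤ x generalizing x
  · have hrefl := this (x := 2 * π - x) ⟨by linarith [hx.2], by linarith [hx.1]⟩ (by linarith)
    rwa [VV_two_pi_sub, two_pi_sub_half, sin_pi_sub] at hrefl
  have hs := sin_half_pos hx
  rw [neg_div, rpow_neg hs.le]
  refine inv_le_VV_of_sin_half_eq_cube ⟨hπx, hx.2⟩ (by positivity) ?_
  rw [← rpow_natCast, ← rpow_mul hs.le]
  norm_num

lemma VV_pos {x : ℝ} (hx : x ∈ Ioo 0 (2 * π)) : 0 < VV x :=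
  (rpow_pos_of_pos (sin_half_pos hx) _).trans_le (sin_half_rpow_le_VV hx)

end KernelK2

section Weight

lemma VV_rpow_mul_sqrt_WW {y : ℝ} (hy : y ∈ Ioo 0 (2 * π)) :
    VV y ^ (-1 / 2 : ℝ) * √(WW y) = sin (y / 2) := by
  have hV := VV_pos hy
  rw [WW, sqrt_mul (sq_nonneg _), sqrt_sq (sin_half_pos hy).le, rpow_neg_half hV.le]
  field_simp

lemma sin_half_rpow_le_WW {y : ℝ} (hy : y ∈ Ioo 0 (2 * π)) :
    sin (y / 2) ^ (5 / 3 : ℝ) ≤ WW y := by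
  have hs := sin_half_pos hy
  calc sin (y / 2) ^ (5 / 3 : ℝ) = sin (y / 2) ^ 2 * sin (y / 2) ^ (-1 / 3 : ℝ) := by
        rw [← rpow_natCast, ← rpow_add hs]
        norm_num
    _ ≤ WW y := by
        unfold WW
        gcongr
        exact sin_half_rpow_le_VV hy

lemma sin_half_div_WW_add_le {θ lam y : ℝ} (hθ : θ ∈ Icc 0 1) (hlam : 0 < lam)
    (hy : y ∈ Ioo 0 (2 * π)) :
    sin (y / 2) / (WW y + lam) ≤ lam ^ (-θ) * sin (y / 2) ^ ((5 * θ - 2) / 3) := by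
  have hs := sin_half_pos hy
  have hW := sin_half_rpow_le_WW hy
  have hW0 : 0 < WW y := (rpow_pos_of_pos hs _).trans_le hW
  have hθ' : 0 ≤ 1 - θ := sub_nonneg.2 hθ.2
  rw [div_le_iff₀ (by positivity)]
  calc sin (y / 2)
      = lam ^ (-θ) * sin (y / 2) ^ ((5 * θ - 2) / 3)
          * ((sin (y / 2) ^ (5 / 3 : ℝ)) ^ (1 - θ) * lam ^ θ) := by
        rw [← rpow_mul hs.le, mul_mul_mul_comm, mul_comm (lam ^ (-θ)), mul_mul_mul_comm,
          mul_comm (lam ^ (-θ)), ← rpow_add hs, ← rpow_add hlam]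
        ring_nf
        simp
    _ ≤ lam ^ (-θ) * sin (y / 2) ^ ((5 * θ - 2) / 3) * (WW y ^ (1 - θ) * lam ^ θ) := by gcongr
    _ ≤ lam ^ (-θ) * sin (y / 2) ^ ((5 * θ - 2) / 3) * (WW y + lam) := by
        gcongr
        exact rpow_one_sub_mul_rpow_le_add hW0.le hlam.le hθ

lemma abs_omg'_le_one (y : ℝ) : |omg' y| ≤ 1 := by
  unfold omg'
  split_ifs
  · simp
  · rw [abs_div, abs_two]
    linarith [abs_cos_le_one (y / 2)]

end Weight

section PointwiseBound

lemma exists_abs_two_mul_K2_sub_K1_le {x : ℝ} (hx : x ∈ Ioo 0 (2 * π)) :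
    ∃ p ∈ Icc 0 (2 * π), ∃ q ∈ Icc 0 (2 * π), ∀ y ∈ Ioo 0 (2 * π), y ≠ p → y ≠ q →
      |2 * K2 x y - K1 x y| ≤ 4 * sin (x / 2) ^ (-1 / 2 : ℝ) * singularSum (-1 / 2) p q y := by
  obtain ⟨p, hp, q, hq, hK1⟩ := exists_K1_le hx
  refine ⟨p, hp, q, hq, fun y hy hyp hyq => ?_⟩
  calc |2 * K2 x y - K1 x y| ≤ 2 * K2 x y + K1 x y :=
        abs_le.2 ⟨by linarith [K2_nonneg x y], by linarith [K1_nonneg x y]⟩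
    _ ≤ 2 * (2 * (sin (x / 2) ^ (-1 / 2 : ℝ) * sin (y / 2) ^ (-1 / 2 : ℝ)))
        + 4 * sin (x / 2) ^ (-1 / 2 : ℝ) * (|y - p| ^ (-1 / 2 : ℝ) + |y - q| ^ (-1 / 2 : ℝ)) := by
        gcongr
        exacts [K2_le hx hy, hK1 y hy hyp hyq]
    _ = 4 * sin (x / 2) ^ (-1 / 2 : ℝ) * singularSum (-1 / 2) p q y := by
        unfold singularSum
        ring

lemma abs_phiLam_integrand_le {θ α lam x y : ℝ} (hθ : θ ∈ Icc 0 1) (hα : α ≤ (5 * θ - 2) / 3)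
    (hlam : 0 < lam) (hx : x ∈ Ioo 0 (2 * π)) (hy : y ∈ Ioo 0 (2 * π)) :
    |Bker x y * (√(WW y) / (WW y + lam) * omg' y)|
      ≤ VV x ^ (-1 / 2 : ℝ) * |2 * K2 x y - K1 x y| * (lam ^ (-θ) * sin (y / 2) ^ α) := by
  have hs := sin_half_pos hy
  have hV := VV_pos hx
  have hW : 0 < WW y := (rpow_pos_of_pos hs _).trans_le (sin_half_rpow_le_WW hy)
  have hweight : sin (y / 2) / (WW y + lam) ≤ lam ^ (-θ) * sin (y / 2) ^ α :=
    (sin_half_div_WW_add_le hθ hlam hy).trans <|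
      mul_le_mul_of_nonneg_left (rpow_le_rpow_of_exponent_ge hs (sin_le_one _) hα)
        (rpow_nonneg hlam.le _)
  calc |Bker x y * (√(WW y) / (WW y + lam) * omg' y)|
      = |VV x ^ (-1 / 2 : ℝ) * (2 * K2 x y - K1 x y) * (sin (y / 2) / (WW y + lam)) * omg' y| := by
        rw [← VV_rpow_mul_sqrt_WW hy, Bker]
        ring_nf
    _ = VV x ^ (-1 / 2 : ℝ) * |2 * K2 x y - K1 x y| * (sin (y / 2) / (WW y + lam)) * |omg' y| := by
        rw [abs_mul, abs_mul, abs_mul, abs_of_pos (rpow_pos_of_pos hV _),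
          abs_of_pos (div_pos hs (add_pos hW hlam))]
    _ ≤ VV x ^ (-1 / 2 : ℝ) * |2 * K2 x y - K1 x y| * (lam ^ (-θ) * sin (y / 2) ^ α) * 1 := by
        gcongr
        exact abs_omg'_le_one y
    _ = _ := mul_one _

lemma exists_norm_phiLam_integrand_le_singularSum {θ α lam x : ℝ} (hθ : θ ∈ Icc 0 1)
    (hα : α ≤ (5 * θ - 2) / 3) (hα0 : α ≤ 0) (hlam : 0 < lam) (hx : x ∈ Ioo 0 (2 * π)) :
    ∃ p ∈ Icc 0 (2 * π), ∃ q ∈ Icc 0 (2 * π), ∀ᵐ y ∂volume.restrict II,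
      ‖Bker x y * (√(WW y) / (WW y + lam) * omg' y)‖
        ≤ 12 * lam ^ (-θ) * (VV x * sin (x / 2)) ^ (-1 / 2 : ℝ)
          * singularSum (α + -1 / 2) p q y := by
  obtain ⟨p, hp, q, hq, hK⟩ := exists_abs_two_mul_K2_sub_K1_le hx
  refine ⟨p, hp, q, hq, ?_⟩
  have hV := VV_pos hx
  have hsx := sin_half_pos hx
  filter_upwards [ae_restrict_II_mem_Ioo, ae_restrict_of_ae (Measure.ae_ne volume p),
    ae_restrict_of_ae (Measure.ae_ne volume q)] with y hy hyp hyq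
  have hsy := sin_half_pos hy
  rw [norm_eq_abs, mul_rpow hV.le hsx.le]
  calc |Bker x y * (√(WW y) / (WW y + lam) * omg' y)|
      ≤ VV x ^ (-1 / 2 : ℝ) * |2 * K2 x y - K1 x y| * (lam ^ (-θ) * sin (y / 2) ^ α) :=
        abs_phiLam_integrand_le hθ hα hlam hx hy
    _ ≤ VV x ^ (-1 / 2 : ℝ) * (4 * sin (x / 2) ^ (-1 / 2 : ℝ) * singularSum (-1 / 2) p q y)
          * (lam ^ (-θ) * sin (y / 2) ^ α) := by
        gcongr
        exact hK y hy hyp hyq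
    _ = 4 * lam ^ (-θ) * (VV x ^ (-1 / 2 : ℝ) * sin (x / 2) ^ (-1 / 2 : ℝ))
          * (sin (y / 2) ^ α * singularSum (-1 / 2) p q y) := by ring
    _ ≤ 4 * lam ^ (-θ) * (VV x ^ (-1 / 2 : ℝ) * sin (x / 2) ^ (-1 / 2 : ℝ))
          * (3 * singularSum (α + -1 / 2) p q y) :=
        mul_le_mul_of_nonneg_left
          (sin_half_rpow_mul_singularSum_le hα0 (by norm_num) hy hyp hyq) (by positivity)
    _ = _ := by ring

-- At `x = 0` the kernels cancel, `2 K₂(0, y) = K₁(0, y)`, so the divergence of `V(0)` is harmless.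
lemma phiLam_zero (lam : ℝ) : phiLam lam 0 = 0 := by
  refine integral_eq_zero_of_ae ?_
  filter_upwards [ae_restrict_II_mem_Ioo] with y hy
  have hcos : 0 < 1 + cos (y / 2) := by
    have hlt : cos π < cos (y / 2) :=
      cos_lt_cos_of_nonneg_of_le_pi (by linarith [hy.1]) le_rfl (by linarith [hy.2])
    rw [cos_pi] at hlt
    linarith
  have hcancel : 2 * K2 0 y - K1 0 y = 0 := by
    simp only [K2, K1, Fp, Fm, zero_div, cos_zero, sin_zero, mul_zero, zero_mul, add_zero,
      sub_zero, if_pos (pow_pos hcos 2)]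
    ring
  simp only [Bker, hcancel, mul_zero, zero_mul, Pi.zero_apply]

theorem phiLam_pointwise_bound_general {θ : ℝ} (hθ : θ ∈ Ioc (1 / 10) 1) :
    ∃ c > 0, ∀ lam > 0, ∀ x ∈ II,
      |phiLam lam x| ≤ c * lam ^ (-θ) * (VV x * sin (x / 2)) ^ (-1 / 2 : ℝ) := by
  have hθ' : θ ∈ Icc 0 1 := ⟨by linarith [hθ.1], hθ.2⟩
  have hα : -1 / 2 < min ((5 * θ - 2) / 3) 0 := lt_min (by linarith [hθ.1]) (by norm_num)
  have hα0 : min ((5 * θ - 2) / 3) 0 ≤ 0 := min_le_right _ _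
  obtain ⟨M, hM, hbound⟩ := exists_setIntegral_singularSum_le
    (r := min ((5 * θ - 2) / 3) 0 + -1 / 2) (by linarith) (by linarith)
  refine ⟨12 * M, by positivity, fun lam hlam x hx => ?_⟩
  rcases hx.1.eq_or_lt with rfl | hx0
  · simp [phiLam_zero]
  have hx' : x ∈ Ioo 0 (2 * π) := ⟨hx0, hx.2⟩
  have hVs : 0 < VV x * sin (x / 2) := mul_pos (VV_pos hx') (sin_half_pos hx')
  obtain ⟨p, hp, q, hq, hle⟩ :=
    exists_norm_phiLam_integrand_le_singularSum hθ' (min_le_left _ _) hα0 hlam hx'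
  obtain ⟨hint, hintegral⟩ := hbound p hp q hq
  have hphi := norm_integral_le_of_norm_le (hint.const_mul _) hle
  rw [integral_const_mul] at hphi
  calc |phiLam lam x|
      ≤ 12 * lam ^ (-θ) * (VV x * sin (x / 2)) ^ (-1 / 2 : ℝ)
          * ∫ y in II, singularSum (min ((5 * θ - 2) / 3) 0 + -1 / 2) p q y := hphi
    _ ≤ 12 * lam ^ (-θ) * (VV x * sin (x / 2)) ^ (-1 / 2 : ℝ) * M := by gcongr
    _ = 12 * M * lam ^ (-θ) * (VV x * sin (x / 2)) ^ (-1 / 2 : ℝ) := by ring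

end PointwiseBound

/-- **Lemma 6.3.**  For every `0 < ε < 3/10` there is `c_ε > 0` such that for all
`0 < λ < 1` and `x ∈ I`, `|φ_λ(x)| ≤ c_ε λ^{−1/10−ε} (V(x) sin(x/2))^{−1/2}`. -/
theorem phiLam_pointwise_bound :
    ∀ ε ∈ Set.Ioo (0 : ℝ) (3 / 10), ∃ c > (0 : ℝ),
      ∀ lam ∈ Set.Ioo (0 : ℝ) 1, ∀ x ∈ II,
        |phiLam lam x|
          ≤ c * lam ^ (-(1 : ℝ) / 10 - ε) * (VV x * Real.sin (x / 2)) ^ (-(1 : ℝ) / 2) := by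
  intro ε hε
  obtain ⟨c, hc, h⟩ := phiLam_pointwise_bound_general (θ := 1 / 10 + ε)
    ⟨by linarith [hε.1], by linarith [hε.2]⟩
  exact ⟨c, hc, fun lam hlam x hx => by
    simpa only [neg_add', ← neg_div] using h lam hlam.1 x hx⟩
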